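/- The set S of inaccessible degrees of D is finite, every s ∈ S satisfies s ≤ N + h (as integers), the kernel of D is finite-dimensional, and the height of D equals minus the index of D: h = card(S) − dim ker(D), i.e. h = β(D) − α(D) where α(D) = dim ker(D) and β(D) = card(S) is the codimension of the range of D. -/

import Mathlib

open Polynomial

/-- The degrees of the nonzero elements of a finite-dimensional space of polynomials are as many
as its dimension. -/
theorem Polynomial.finite_natDegree_and_ncard_eq_finrank {K : Type*} [Field K]
    (U : Submodule K K[X]) [FiniteDimensional K U] :
    {n | ∃ u ∈ U, u ≠ 0 ∧ u.natDegree = n}.Finite ∧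
      {n | ∃ u ∈ U, u ≠ 0 ∧ u.natDegree = n}.ncard = Module.finrank K U := by
  classical
  set T : Set ℕ := {n | ∃ u ∈ U, u ≠ 0 ∧ u.natDegree = n}
  choose! f hfU hf0 hfd using fun n (hn : n ∈ T) => hn
  let F : Polynomial.Sequence K :=
    { elems' := fun n => if n ∈ T then f n else X ^ n
      degree_eq' := fun n => by
        by_cases hn : n ∈ T
        · simp [hn, degree_eq_natDegree (hf0 n hn), hfd n hn]
        · simp [hn] }
  have hF : (F : ℕ → K[X]) ∘ ((↑) : T → ℕ) = fun n : T => f n := by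
    funext n
    exact if_pos n.2
  have hli : LinearIndependent K (fun n : T => (⟨f n, hfU n n.2⟩ : U)) := by
    refine LinearIndependent.of_comp U.subtype ?_
    have := F.linearIndependent.comp ((↑) : T → ℕ) Subtype.val_injective
    rwa [hF] at this
  have : Finite T := hli.finite
  have : Fintype T := Fintype.ofFinite T
  refine ⟨T.toFinite, ?_⟩
  rw [← Nat.card_coe_set_eq, Nat.card_eq_fintype_card]
  refine le_antisymm hli.fintype_card_le_finrank ?_
  let c : U →ₗ[K] (T → K) := LinearMap.pi fun n => (lcoeff K n).comp U.subtype
  have hc : Function.Injective c := by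
    rw [← LinearMap.ker_eq_bot, LinearMap.ker_eq_bot']
    intro u hu
    by_contra hne
    have hu0 : (u : K[X]) ≠ 0 := fun h => hne (Subtype.ext h)
    have := congrFun hu ⟨(u : K[X]).natDegree, u, u.2, hu0, rfl⟩
    exact hu0 (leadingCoeff_eq_zero.mp this)
  simpa using LinearMap.finrank_le_finrank_of_injective hc

/-- A differential operator of height at most `h` raises degrees by at most `h`. -/
theorem Polynomial.coeff_sum_mul_iterate_derivative_eq_zero {R : Type*} [Semiring R]
    (s : Finset ℕ) (p : ℕ → R[X]) (h : ℤ)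
    (hp : ∀ i ∈ s, p i ≠ 0 → ((p i).natDegree : ℤ) - i ≤ h) (q : R[X]) (m : ℕ)
    (hm : (q.natDegree : ℤ) + h < m) :
    (∑ i ∈ s, p i * derivative^[i] q).coeff m = 0 := by
  rw [finsetSum_coeff]
  refine Finset.sum_eq_zero fun i hi => ?_
  by_cases hpi : p i = 0
  · simp [hpi]
  by_cases hqi : q.natDegree < i
  · simp [iterate_derivative_eq_zero hqi]
  refine coeff_eq_zero_of_natDegree_lt (natDegree_mul_le.trans_lt ?_)
  have h₁ := hp i hi hpi
  have h₂ := natDegree_iterate_derivative q i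
  omega

/-- If a linear map raises degrees by at most `h`, and the degree of `X ^ n` by exactly `h`, then
it raises the degree of every polynomial of positive degree `n` by exactly `h`. -/
theorem Polynomial.map_ne_zero_and_natDegree_eq_add {K : Type*} [Field K] (D : K[X] →ₗ[K] K[X])
    (h : ℤ) (hD : ∀ (q : K[X]) (m : ℕ), (q.natDegree : ℤ) + h < m → (D q).coeff m = 0)
    (q : K[X]) (hq : 0 < q.natDegree) (hX : D (X ^ q.natDegree) ≠ 0)
    (hXd : ((D (X ^ q.natDegree)).natDegree : ℤ) = q.natDegree + h) :
    D q ≠ 0 ∧ ((D q).natDegree : ℤ) = q.natDegree + h := by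
  set m := (D (X ^ q.natDegree)).natDegree
  have hq0 : q ≠ 0 := by rintro rfl; simp at hq
  have hcoeff : (D q).coeff m ≠ 0 := by
    have hlt := q.eraseLead_natDegree_le
    rw [← q.eraseLead_add_C_mul_X_pow, map_add, coeff_add, hD _ _ (by omega), zero_add,
      ← smul_eq_C_mul, map_smul, coeff_smul, smul_eq_mul]
    exact mul_ne_zero (leadingCoeff_ne_zero.mpr hq0) (leadingCoeff_ne_zero.mpr hX)
  have hle : (D q).natDegree ≤ m :=
    natDegree_le_iff_coeff_eq_zero.mpr fun k hk => hD q k (by omega)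
  refine ⟨fun h0 => hcoeff (by simp [h0]), ?_⟩
  rw [← hXd, natDegree_eq_of_le_of_coeff_ne_zero hle hcoeff]

/-- The set `S` of inaccessible degrees of `D` is finite, every
`s ∈ S` satisfies `s ≤ N + h` (as integers), the kernel of `D` is finite dimensional,
and the height equals minus the index of `D`:
`h = card S - dim ker D` (`h = β(D) - α(D)`). -/
theorem stmt_14 (ν : ℕ) (p : ℕ → Polynomial ℝ) (hp : ∃ i ≤ ν, p i ≠ 0)
    (D : Polynomial ℝ →ₗ[ℝ] Polynomial ℝ)
    (hD : ∀ q, D q = ∑ i ∈ Finset.range (ν + 1), p i * (Polynomial.derivative^[i] q))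
    (h : ℤ)
    (hh : IsGreatest {z : ℤ | ∃ i ≤ ν, p i ≠ 0 ∧ z = ((p i).natDegree : ℤ) - i} h)
    (N : ℕ)
    (hN : ∀ n : ℕ, N < n → D (X ^ n) ≠ 0 ∧ ((D (X ^ n)).natDegree : ℤ) = n + h)
    (S : Set ℕ)
    (hS : S = {s : ℕ | ∀ q : Polynomial ℝ, D q ≠ 0 → (D q).natDegree ≠ s}) :
    S.Finite ∧ (∀ s ∈ S, (s : ℤ) ≤ N + h) ∧
    FiniteDimensional ℝ (LinearMap.ker D) ∧
    h = (S.ncard : ℤ) - (Module.finrank ℝ (LinearMap.ker D) : ℤ) := by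
  have hbound (q : ℝ[X]) (m : ℕ) (hm : (q.natDegree : ℤ) + h < m) : (D q).coeff m = 0 := by
    rw [hD]
    exact coeff_sum_mul_iterate_derivative_eq_zero _ p h
      (fun i hi hpi => hh.2 ⟨i, by simpa [Nat.lt_succ_iff] using hi, hpi, rfl⟩) q m hm
  have hlarge (q : ℝ[X]) (hq : N < q.natDegree) :
      D q ≠ 0 ∧ ((D q).natDegree : ℤ) = q.natDegree + h :=
    map_ne_zero_and_natDegree_eq_add D h hbound q (by omega) (hN _ hq).1 (hN _ hq).2
  obtain ⟨M, hM⟩ : ∃ M : ℕ, (M : ℤ) = N + 1 + h :=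
    ⟨_, by simpa using (hN (N + 1) N.lt_succ_self).2⟩
  have hmem (q : ℝ[X]) : q ∈ degreeLT ℝ (N + 1) ↔ q.natDegree ≤ N := by
    rw [degreeLT_succ_eq_degreeLE, mem_degreeLE, natDegree_le_iff_degree_le]
  have hker : LinearMap.ker D ≤ degreeLT ℝ (N + 1) := fun q hq => by
    rw [hmem]
    by_contra! hlt
    exact (hlarge q hlt).1 hq
  have : FiniteDimensional ℝ (degreeLT ℝ (N + 1)) :=
    (degreeLTEquiv ℝ (N + 1)).symm.finiteDimensional
  have hkerfin : FiniteDimensional ℝ (LinearMap.ker D) := Submodule.finiteDimensional_of_le hker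
  obtain ⟨-, hcard⟩ :=
    finite_natDegree_and_ncard_eq_finrank ((degreeLT ℝ (N + 1)).map D)
  set T : Set ℕ := {n | ∃ u ∈ (degreeLT ℝ (N + 1)).map D, u ≠ 0 ∧ u.natDegree = n}
  have hrank : T.ncard + Module.finrank ℝ (LinearMap.ker D) = N + 1 := by
    have := (D.domRestrict (degreeLT ℝ (N + 1))).finrank_range_add_finrank_ker
    rw [LinearMap.range_domRestrict, LinearMap.ker_domRestrict,
      (Submodule.comapSubtypeEquivOfLe hker).finrank_eq,
      (degreeLTEquiv ℝ (N + 1)).finrank_eq, Module.finrank_fin_fun] at this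
    rw [hcard, this]
  have hTM : T ⊆ Set.Iio M := by
    rintro _ ⟨_, ⟨q, hq, rfl⟩, hne, rfl⟩
    rw [SetLike.mem_coe, hmem] at hq
    by_contra hge
    rw [Set.mem_Iio, not_lt] at hge
    exact hne (leadingCoeff_eq_zero.mp (hbound q _ (by omega)))
  have hST : S = Set.Iio M \ T := by
    ext s
    rw [hS, Set.mem_ofPred_eq, Set.mem_sdiff, Set.mem_Iio]
    constructor
    · intro hs
      refine ⟨?_, ?_⟩
      · by_contra! hge
        obtain ⟨n, hn⟩ : ∃ n : ℕ, (n : ℤ) = s - h := ⟨(s - h).toNat, by omega⟩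
        obtain ⟨hne, hdeg⟩ := hN n (by omega)
        exact hs _ hne (by omega)
      · rintro ⟨_, ⟨q, -, rfl⟩, hne, hd⟩
        exact hs q hne hd
    · rintro ⟨hsM, hsT⟩ q hne hd
      refine hsT ⟨D q, ⟨q, ?_, rfl⟩, hne, hd⟩
      rw [SetLike.mem_coe, hmem]
      by_contra! hlt
      have := (hlarge q hlt).2
      omega
  have hScard : S.ncard + T.ncard = M := by
    rw [hST, Set.ncard_sdiff_add_ncard_of_subset hTM (Set.finite_Iio M), ← Finset.coe_Iio,
      Set.ncard_coe_finset, Nat.card_Iio]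
  refine ⟨hST ▸ (Set.finite_Iio M).sdiff, fun s hs => ?_, hkerfin, by omega⟩
  have : s < M := (hST ▸ hs : s ∈ Set.Iio M \ T).1
  omega
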